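/- arXiv:1604.00941 — 2 statements merged into one kernel-verified Lean document; each statement's English description precedes it below -/
import Mathlib

section
/- For every τ in the complex upper half-plane ℍ, one has ϑ(τ − 1/2; 2τ) = e^{−πiτ/2} · η(2τ)⁵/(η(τ)²·η(4τ)²). Equivalently, ϑ(τ/2 − 1/2; τ) = e^{−πiτ/4}·e₂(τ/2), where e₂(τ) := η(2τ)⁵/(η(τ)²η(4τ)²). -/
open Complex

/-- The Dedekind eta function `η(τ) = e^{πiτ/12} ∏_{n≥1} (1 - e^{2πinτ})`. -/
noncomputable def dedekindEta (τ : ℂ) : ℂ :=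
  Complex.exp ((Real.pi : ℂ) * I * τ / 12) *
    ∏' n : ℕ, (1 - Complex.exp (2 * (Real.pi : ℂ) * I * ((n : ℂ) + 1) * τ))

/-- Zwegers' Jacobi theta function
`ϑ(v;τ) = ∑_{n∈ℤ} e^{2πi(n+1/2)(v+1/2)} e^{πiτ(n+1/2)²}`. -/
noncomputable def jacobiThetaZw (v τ : ℂ) : ℂ :=
  ∑' n : ℤ, Complex.exp (2 * (Real.pi : ℂ) * I * ((n : ℂ) + 1/2) * (v + 1/2)) *
    Complex.exp ((Real.pi : ℂ) * I * τ * ((n : ℂ) + 1/2) ^ 2)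

open Filter Topology

noncomputable def qP (q : ℂ) (N : ℕ) : ℂ := ∏ k ∈ Finset.range N, (1 - q ^ (k + 1))
noncomputable def qR (q : ℂ) (N : ℕ) : ℂ := ∏ k ∈ Finset.range N, (1 + q ^ (2 * k + 1))

lemma one_sub_pow_ne {q : ℂ} (hq : ‖q‖ < 1) (k : ℕ) : 1 - q ^ (k + 1) ≠ 0 := by
  intro h
  have h1 : q ^ (k + 1) = 1 := (sub_eq_zero.mp h).symm
  have h2 : ‖q‖ ^ (k + 1) < 1 := pow_lt_one₀ (norm_nonneg _) hq (by omega)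
  rw [← norm_pow, h1] at h2
  simp at h2

lemma qP_ne {q : ℂ} (hq : ‖q‖ < 1) (N : ℕ) : qP q N ≠ 0 :=
  Finset.prod_ne_zero_iff.mpr fun k _ => one_sub_pow_ne hq k

lemma qP_succ (q : ℂ) (N : ℕ) : qP q (N + 1) = qP q N * (1 - q ^ (N + 1)) := by
  simp [qP, Finset.prod_range_succ]

lemma qR_succ (q : ℂ) (N : ℕ) : qR q (N + 1) = qR q N * (1 + q ^ (2 * N + 1)) := by
  simp [qR, Finset.prod_range_succ]

lemma qP_tendsto {q : ℂ} (hq : ‖q‖ < 1) :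
    Tendsto (qP q) atTop (𝓝 (∏' n : ℕ, (1 - q ^ (n + 1)))) :=
  (ModularForm.multipliable_one_sub_pow hq).hasProd.tendsto_prod_nat

/-- finite product identity -/
lemma fin_prod (q : ℂ) (N : ℕ) :
    qR q N * qP q (2 * N) * qP (q ^ 4) N = qP (q ^ 2) (2 * N) * qP (q ^ 2) N := by
  induction N with
  | zero => simp [qR, qP]
  | succ N ih =>
    have e : 2 * (N + 1) = 2 * N + 1 + 1 := by ring
    simp only [e, qP_succ, qR_succ]
    linear_combination (1 + q ^ (2 * N + 1)) * (1 - q ^ (2 * N + 1)) * (1 - q ^ (2 * N + 1 + 1)) * (1 - (q ^ 4) ^ (N + 1)) * ih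

noncomputable def qS (q y : ℂ) (m : ℕ) : ℂ :=
  ∑ p ∈ Finset.HasAntidiagonal.antidiagonal m, (y ^ p.1 / qP (q ^ 2) p.1) * (q ^ (p.2 ^ 2) / qP (q ^ 2) p.2)

lemma qS_succ {q : ℂ} (hq : ‖q ^ 2‖ < 1) (y : ℂ) (m : ℕ) :
    (1 - (q ^ 2) ^ (m + 1)) * qS q y (m + 1) = (y + q ^ (2 * m + 1)) * qS q y m := by
  have h1 : (1 - (q ^ 2) ^ (m + 1)) * qS q y (m + 1) =
      (∑ p ∈ Finset.HasAntidiagonal.antidiagonal (m + 1), (1 - (q ^ 2) ^ p.1) *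
        ((y ^ p.1 / qP (q ^ 2) p.1) * (q ^ (p.2 ^ 2) / qP (q ^ 2) p.2))) +
      ∑ p ∈ Finset.HasAntidiagonal.antidiagonal (m + 1), (q ^ 2) ^ p.1 * (1 - (q ^ 2) ^ p.2) *
        ((y ^ p.1 / qP (q ^ 2) p.1) * (q ^ (p.2 ^ 2) / qP (q ^ 2) p.2)) := by
    rw [qS, Finset.mul_sum, ← Finset.sum_add_distrib]
    refine Finset.sum_congr rfl fun p hp => ?_
    rw [← Finset.HasAntidiagonal.mem_antidiagonal.mp hp]
    ring
  rw [h1, Finset.Nat.sum_antidiagonal_succ, Finset.Nat.sum_antidiagonal_succ']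
  simp only [pow_zero, sub_self, zero_mul, mul_zero, zero_add, add_zero]
  rw [add_mul, qS, Finset.mul_sum, Finset.mul_sum]
  congr 1
  · refine Finset.sum_congr rfl fun p hp => ?_
    have := one_sub_pow_ne hq p.1
    have := qP_ne hq p.1
    have := qP_ne hq p.2
    rw [qP_succ]
    field_simp
    ring
  · refine Finset.sum_congr rfl fun p hp => ?_
    have := one_sub_pow_ne hq p.2
    have := qP_ne hq p.1
    have := qP_ne hq p.2
    rw [qP_succ, ← Finset.HasAntidiagonal.mem_antidiagonal.mp hp]
    generalize qP (q ^ 2) p.1 = A at *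
    generalize qP (q ^ 2) p.2 = B at *
    generalize hC : 1 - (q ^ 2) ^ (p.2 + 1) = C at *
    field_simp
    ring

lemma qS_prod {q : ℂ} (hq : ‖q ^ 2‖ < 1) (y : ℂ) (m : ℕ) :
    qP (q ^ 2) m * qS q y m = ∏ k ∈ Finset.range m, (y + q ^ (2 * k + 1)) := by
  induction m with
  | zero => simp [qS, qP]
  | succ m ih =>
    rw [Finset.prod_range_succ, ← ih, qP_succ]
    linear_combination qP (q ^ 2) m * qS_succ hq y m

lemma prod_fin_eq (q : ℂ) (N : ℕ) :
    ∏ k ∈ Finset.range (2 * N), (q ^ (2 * N) + q ^ (2 * k + 1)) = q ^ (3 * N ^ 2) * qR q N ^ 2 := by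
  rw [two_mul N, Finset.prod_range_add]
  have h1 : ∏ k ∈ Finset.range N, (q ^ (N + N) + q ^ (2 * k + 1)) = q ^ (N ^ 2) * qR q N := by
    have h3 : ∏ k ∈ Finset.range N, q ^ (2 * k + 1) = q ^ (N ^ 2) := by
      induction N with
      | zero => simp
      | succ n ih => rw [Finset.prod_range_succ, ih]; ring
    rw [← h3, qR, ← Finset.prod_range_reflect (fun k => 1 + q ^ (2 * k + 1)), ← Finset.prod_mul_distrib]
    refine Finset.prod_congr rfl fun k hk => ?_
    have hk := Finset.mem_range.mp hk
    obtain ⟨d, rfl⟩ := Nat.exists_eq_add_of_lt hk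
    have : k + d + 1 - 1 - k = d := by omega
    rw [this]
    ring
  have h2 : ∏ k ∈ Finset.range N, (q ^ (N + N) + q ^ (2 * (N + k) + 1)) = q ^ (2 * N ^ 2) * qR q N := by
    have h3 : ∏ k ∈ Finset.range N, q ^ (2 * N) = q ^ (2 * N ^ 2) := by
      rw [Finset.prod_const, Finset.card_range]; ring
    rw [← h3, qR, ← Finset.prod_mul_distrib]
    refine Finset.prod_congr rfl fun k hk => ?_
    ring
  rw [h1, h2]; ring

noncomputable def qf (q : ℂ) (N : ℕ) (n : ℤ) : ℂ :=
  if n ∈ Finset.Icc (-(N : ℤ)) N then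
    q ^ (n.natAbs ^ 2) * (qP (q ^ 2) (2 * N) * (qP (q ^ 2) (N + n).toNat)⁻¹ * (qP (q ^ 2) (N - n).toNat)⁻¹)
  else 0

lemma qR_sq {q : ℂ} (hq : ‖q ^ 2‖ < 1) (h0 : q ≠ 0) (N : ℕ) :
    qR q N ^ 2 = ∑' n : ℤ, qf q N n := by
  rw [tsum_eq_sum (s := Finset.Icc (-(N : ℤ)) N) (fun n hn => by simp only [qf, if_neg hn])]
  apply mul_left_cancel₀ (pow_ne_zero (3 * N ^ 2) h0)
  rw [← prod_fin_eq, ← qS_prod hq, qS, Finset.mul_sum, Finset.mul_sum]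
  refine Finset.sum_nbij' (fun p => (N : ℤ) - p.2) (fun n => ((N + n).toNat, (N - n).toNat)) ?_ ?_ ?_ ?_ ?_
  · rintro ⟨i, j⟩ h
    simp at h ⊢; omega
  · intro n h
    simp at h ⊢; omega
  · rintro ⟨i, j⟩ h
    simp at h ⊢; omega
  · intro n h
    simp at h ⊢; omega
  · rintro ⟨i, j⟩ h
    have h' : i + j = 2 * N := by simpa using h
    have hm : ((N : ℤ) - j) ∈ Finset.Icc (-(N : ℤ)) N := by simp; omega
    have e1 : ((N : ℤ) + (N - j)).toNat = i := by omega
    have e2 : ((N : ℤ) - (N - j)).toNat = j := by omega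
    simp only [qf, if_pos hm, e1, e2]
    have e3 : 2 * N * i + j ^ 2 = 3 * N ^ 2 + ((N : ℤ) - j).natAbs ^ 2 := by
      zify
      rw [sq_abs]
      have : (i : ℤ) = 2 * N - j := by omega
      rw [this]; ring
    have e4 : (q ^ (2 * N)) ^ i * q ^ (j ^ 2) = q ^ (3 * N ^ 2) * q ^ (((N : ℤ) - j).natAbs ^ 2) := by
      rw [← pow_mul, ← pow_add, ← pow_add, e3]
    simp only [div_eq_mul_inv]
    linear_combination (qP (q ^ 2) (2 * N) * (qP (q ^ 2) i)⁻¹ * (qP (q ^ 2) j)⁻¹) * e4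

lemma summable_sq {r : ℝ} (h0 : 0 ≤ r) (h1 : r < 1) : Summable fun n : ℤ => r ^ (n.natAbs ^ 2) := by
  have h : Summable fun n : ℕ => r ^ (n ^ 2) :=
    Summable.of_nonneg_of_le (fun n => by positivity)
      (fun n => pow_le_pow_of_le_one h0 h1.le (Nat.le_self_pow (by norm_num) n))
      (summable_geometric_of_lt_one h0 h1)
  apply Summable.of_nat_of_neg <;> simpa using h

lemma qR_sq_tendsto {q : ℂ} (hq : ‖q‖ < 1) (h0 : q ≠ 0) {E : ℂ} (hE : E ≠ 0)
    (ht : Tendsto (qP (q ^ 2)) atTop (𝓝 E)) :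
    Tendsto (fun N => qR q N ^ 2) atTop (𝓝 (∑' n : ℤ, q ^ (n.natAbs ^ 2) * (E * E⁻¹ * E⁻¹))) := by
  have hq2 : ‖q ^ 2‖ < 1 := by rw [norm_pow]; exact pow_lt_one₀ (norm_nonneg _) hq (by norm_num)
  simp only [qR_sq hq2 h0]
  have hi := ht.inv₀ hE
  obtain ⟨A, hA⟩ := ht.norm.bddAbove_range
  obtain ⟨B, hB⟩ := hi.norm.bddAbove_range
  have hA' : ∀ n, ‖qP (q ^ 2) n‖ ≤ A := fun n => hA ⟨n, rfl⟩
  have hB' : ∀ n, ‖(qP (q ^ 2) n)⁻¹‖ ≤ B := fun n => hB ⟨n, rfl⟩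
  have hA0 : 0 ≤ A := (norm_nonneg _).trans (hA' 0)
  have hB0 : 0 ≤ B := (norm_nonneg _).trans (hB' 0)
  refine tendsto_tsum_of_dominated_convergence (bound := fun n : ℤ => ‖q‖ ^ (n.natAbs ^ 2) * (A * B * B))
    ((summable_sq (norm_nonneg _) hq).mul_right _) ?_ ?_
  · intro n
    have t1 : Tendsto (fun N : ℕ => 2 * N) atTop atTop := tendsto_atTop_atTop.mpr fun b => ⟨b, fun a _ => by omega⟩
    have t2 : Tendsto (fun N : ℕ => ((N : ℤ) + n).toNat) atTop atTop :=
      tendsto_atTop_atTop.mpr fun b => ⟨b + n.natAbs, fun a _ => by omega⟩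
    have t3 : Tendsto (fun N : ℕ => ((N : ℤ) - n).toNat) atTop atTop :=
      tendsto_atTop_atTop.mpr fun b => ⟨b + n.natAbs, fun a _ => by omega⟩
    refine Tendsto.congr' ?_ ((((ht.comp t1).mul (hi.comp t2)).mul (hi.comp t3)).const_mul (q ^ (n.natAbs ^ 2)))
    filter_upwards [eventually_ge_atTop n.natAbs] with N hN
    have hm : n ∈ Finset.Icc (-(N : ℤ)) N := by simp; omega
    simp only [qf, if_pos hm, Function.comp]
  · refine Eventually.of_forall fun N n => ?_
    rw [qf]
    split_ifs
    · simp only [norm_mul, norm_pow]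
      gcongr
      · exact hA' _
      · exact hB' _
      · exact hB' _
    · simp; positivity

lemma theta_prod {q : ℂ} (hq : ‖q‖ < 1) (h0 : q ≠ 0) {E1 E2 E4 : ℂ} (h1 : E1 ≠ 0) (h2 : E2 ≠ 0)
    (h4 : E4 ≠ 0) (t1 : Tendsto (qP q) atTop (𝓝 E1)) (t2 : Tendsto (qP (q ^ 2)) atTop (𝓝 E2))
    (t4 : Tendsto (qP (q ^ 4)) atTop (𝓝 E4)) :
    ∑' n : ℤ, q ^ (n.natAbs ^ 2) = E2 ^ 5 / (E1 ^ 2 * E4 ^ 2) := by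
  have hq4 : ‖q ^ 4‖ < 1 := by rw [norm_pow]; exact pow_lt_one₀ (norm_nonneg _) hq (by norm_num)
  have t : Tendsto (fun N : ℕ => 2 * N) atTop atTop := tendsto_atTop_atTop.mpr fun b => ⟨b, fun a _ => by omega⟩
  have hR : Tendsto (qR q) atTop (𝓝 (E2 * E2 / (E1 * E4))) := by
    refine Tendsto.congr ?_ (((t2.comp t).mul t2).div ((t1.comp t).mul t4) (mul_ne_zero h1 h4))
    intro N
    have := qP_ne hq (2 * N)
    have := qP_ne hq4 N
    simp only [Function.comp, Pi.mul_apply, Pi.div_apply]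
    rw [div_eq_iff (by positivity), ← fin_prod]; ring
  have := tendsto_nhds_unique (qR_sq_tendsto hq h0 h2 t2) (hR.pow 2)
  rw [tsum_mul_right] at this
  field_simp at this ⊢
  linear_combination this

lemma eta_aux (τ q : ℂ) (hτ : 0 < τ.im) (hq : q = cexp (2 * Real.pi * I * τ)) :
    ∃ E : ℂ, E ≠ 0 ∧ Tendsto (qP q) atTop (𝓝 E) ∧
      dedekindEta τ = cexp ((Real.pi : ℂ) * I * τ / 12) * E := by
  have hn : ‖q‖ < 1 := by
    rw [hq]; exact UpperHalfPlane.norm_exp_two_pi_I_lt_one ⟨τ, hτ⟩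
  have e : ∀ n : ℕ, cexp (2 * (Real.pi : ℂ) * I * ((n : ℂ) + 1) * τ) = q ^ (n + 1) := by
    intro n
    rw [hq, ← Complex.exp_nat_mul]; congr 1; push_cast; ring
  refine ⟨_, ?_, qP_tendsto hn, ?_⟩
  · have := ModularForm.eta_tprod_ne_zero (z := τ) hτ
    simpa only [ModularForm.eta_q_eq_pow, ← hq] using this
  · simp only [dedekindEta, e]

/-- `ϑ(τ − 1/2; 2τ) = e^{−πiτ/2} · η(2τ)⁵/(η(τ)²·η(4τ)²)`. -/
theorem theta_eq_e2 (τ : ℂ) (hτ : 0 < τ.im) :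
    jacobiThetaZw (τ - 1/2) (2 * τ) =
      Complex.exp (-(Real.pi : ℂ) * I * τ / 2) *
        (dedekindEta (2 * τ) ^ 5 / (dedekindEta τ ^ 2 * dedekindEta (4 * τ) ^ 2)) := by
  set q := cexp (2 * Real.pi * I * τ) with hq
  have hn : ‖q‖ < 1 := UpperHalfPlane.norm_exp_two_pi_I_lt_one ⟨τ, hτ⟩
  obtain ⟨E1, n1, t1, e1⟩ := eta_aux τ q hτ hq
  obtain ⟨E2, n2, t2, e2⟩ := eta_aux (2 * τ) (q ^ 2) (by simpa using hτ)
    (by rw [hq, ← Complex.exp_nat_mul]; congr 1; push_cast; ring)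
  obtain ⟨E4, n4, t4, e4⟩ := eta_aux (4 * τ) (q ^ 4) (by simpa using hτ)
    (by rw [hq, ← Complex.exp_nat_mul]; congr 1; push_cast; ring)
  have key := theta_prod hn (Complex.exp_ne_zero _) n1 n2 n4 t1 t2 t4
  have hL : jacobiThetaZw (τ - 1/2) (2 * τ) =
      cexp (-(Real.pi : ℂ) * I * τ / 2) * ∑' n : ℤ, q ^ (n.natAbs ^ 2) := by
    rw [← (Equiv.addRight (1 : ℤ)).tsum_eq (fun n : ℤ => q ^ (n.natAbs ^ 2)), ← tsum_mul_left, jacobiThetaZw]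
    refine tsum_congr fun n => ?_
    have hc : (((n + 1).natAbs ^ 2 : ℕ) : ℂ) = ((n : ℂ) + 1) ^ 2 := by
      have : (((n + 1).natAbs ^ 2 : ℕ) : ℤ) = (n + 1) ^ 2 := by push_cast; rw [sq_abs]
      have h2 := congrArg (Int.cast : ℤ → ℂ) this
      rw [Int.cast_natCast] at h2
      rw [h2]; push_cast; ring
    rw [Equiv.coe_addRight, hq, ← Complex.exp_nat_mul, hc, ← Complex.exp_add, ← Complex.exp_add]
    congr 1; ring
  rw [hL, key, e1, e2, e4]
  congr 1
  have hx : cexp (Real.pi * I * (2 * τ) / 12) ^ 5 =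
      cexp (Real.pi * I * τ / 12) ^ 2 * cexp (Real.pi * I * (4 * τ) / 12) ^ 2 := by
    simp only [← Complex.exp_nat_mul, ← Complex.exp_add]
    congr 1; push_cast; ring
  have z1 := Complex.exp_ne_zero (Real.pi * I * τ / 12)
  have z4 := Complex.exp_ne_zero (Real.pi * I * (4 * τ) / 12)
  simp only [mul_pow, hx]
  generalize cexp (Real.pi * I * τ / 12) = a at *
  generalize cexp (Real.pi * I * (4 * τ) / 12) = b at *
  field_simp
end

section
/- Let τ ∈ ℍ and let a ∈ (−1/2, 1/2) with a ≠ 0. Then the integral of g_{a+1/2, 1}(z)/√(−i(z+τ)) along the vertical path from 0 to i∞ converges and equals −e(−a²τ/2 + a)·h(aτ − 1/2; τ) + e(a)/√(−iτ). That is, i·∫₀^∞ g_{a+1/2,1}(it)/√(−i(it+τ)) dt = −e^{2πi(−a²τ/2 + a)}·h(aτ − 1/2; τ) + e^{2πia}/√(−iτ). -/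
open Complex

/-- Zwegers' unary theta function
`g_{a,b}(τ) = ∑_{n∈ℤ} (n+a) e^{2πib(n+a)} e^{πiτ(n+a)²}`. -/
noncomputable def gUnary (a b : ℝ) (τ : ℂ) : ℂ :=
  ∑' n : ℤ, ((n : ℂ) + a) * Complex.exp (2 * (Real.pi : ℂ) * I * b * ((n : ℂ) + a)) *
    Complex.exp ((Real.pi : ℂ) * I * τ * ((n : ℂ) + a) ^ 2)

/-- The Mordell integral `h(u;τ) = ∫_ℝ e^{πiτx² − 2πux}/cosh(πx) dx`. -/
noncomputable def mordellH (u τ : ℂ) : ℂ :=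
  ∫ x : ℝ, Complex.exp ((Real.pi : ℂ) * I * τ * (x : ℂ) ^ 2 - 2 * (Real.pi : ℂ) * u * x) /
    Complex.cosh ((Real.pi : ℂ) * x)


section L1
open Real Set Filter Topology MeasureTheory

noncomputable def Eaux (x : ℝ) : ℝ := ∫ v in (0:ℝ)..x, Real.exp (-1 * v ^ 2)

lemma Eaux_deriv (x : ℝ) : HasDerivAt Eaux (Real.exp (-1 * x ^ 2)) x := by
  have hc : Continuous (fun v : ℝ => Real.exp (-1 * v ^ 2)) := by fun_prop
  exact (hc.integral_hasStrictDerivAt 0 x).hasDerivAt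

lemma Eaux_top : Tendsto Eaux atTop (𝓝 (√π / 2)) := by
  have h := intervalIntegral_tendsto_integral_Ioi (μ := volume) (0:ℝ)
    (integrable_exp_neg_mul_sq (b := 1) one_pos).integrableOn tendsto_id
  rw [integral_gaussian_Ioi] at h
  have e : Eaux = fun x => ∫ v in (0:ℝ)..x, Real.exp (-1 * v ^ 2) := rfl
  rw [e]
  simpa using h

lemma Eaux_neg (x : ℝ) : Eaux (-x) = - Eaux x := by
  unfold Eaux
  have := intervalIntegral.integral_comp_neg (a := 0) (b := x) (fun v : ℝ => Real.exp (-1 * v ^ 2))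
  simp only [neg_sq, neg_zero] at this
  rw [this, intervalIntegral.integral_symm]

lemma Eaux_bot : Tendsto Eaux atBot (𝓝 (-(√π / 2))) := by
  have h := (Eaux_top.comp tendsto_neg_atBot_atTop).neg
  refine h.congr fun x => ?_
  simp [Eaux_neg]

noncomputable def Faux (p q t : ℝ) : ℝ :=
  Real.exp (-2*p*q) * Eaux (q * √t - p * (√t)⁻¹) - Real.exp (2*p*q) * Eaux (q * √t + p * (√t)⁻¹)

lemma Faux_deriv {p q t : ℝ} (ht : 0 < t) :
    HasDerivAt (Faux p q) (p * (Real.exp (-p^2/t - q^2*t) / (t * √t))) t := by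
  have hs := Real.hasDerivAt_sqrt ht.ne'
  have hpos : 0 < √t := Real.sqrt_pos.mpr ht
  have hi := hs.inv hpos.ne'
  have h1 := (Eaux_deriv _).comp t ((hs.const_mul q).sub (hi.const_mul p))
  have h2 := (Eaux_deriv _).comp t ((hs.const_mul q).add (hi.const_mul p))
  have h := (h1.const_mul (Real.exp (-2*p*q))).sub (h2.const_mul (Real.exp (2*p*q)))
  refine h.congr_deriv ?_
  have hsq : (√t)^2 = t := Real.sq_sqrt ht.le
  obtain ⟨r, hr⟩ : ∃ r, r = √t := ⟨_, rfl⟩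
  have ht' : t = r^2 := by rw [hr, hsq]
  simp only [Pi.sub_apply, Pi.add_apply, Pi.inv_apply, ← hr]
  rw [← hr] at hpos
  subst ht'
  rw [← mul_assoc, ← mul_assoc, ← Real.exp_add, ← Real.exp_add]
  have e1 : -2*p*q + -1 * (q * r - p * r⁻¹)^2 = -p^2/r^2 - q^2*r^2 := by field_simp; ring
  have e2 : 2*p*q + -1 * (q * r + p * r⁻¹)^2 = -p^2/r^2 - q^2*r^2 := by field_simp; ring
  rw [e1, e2]
  field_simp
  ring

lemma Jint {p q : ℝ} (hp : 0 < p) (hq : 0 < q) :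
    IntegrableOn (fun t => Real.exp (-p^2/t - q^2*t) / (t * √t)) (Ioi 0) ∧
    ∫ t in Ioi (0:ℝ), Real.exp (-p^2/t - q^2*t) / (t * √t) = √π / p * Real.exp (-2*p*q) := by
  set m : ℝ := Real.exp (-2*p*q) * (-(√π/2)) - Real.exp (2*p*q) * (√π/2) with hm
  set l : ℝ := Real.exp (-2*p*q) * (√π/2) - Real.exp (2*p*q) * (√π/2) with hl
  let g : ℝ → ℝ := fun t => if t ≤ 0 then m else Faux p q t
  have s0 : Tendsto (fun t => √t) (𝓝[>] (0:ℝ)) (𝓝 0) := by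
    have : Tendsto (fun t => √t) (𝓝 (0:ℝ)) (𝓝 (√0)) := Real.continuous_sqrt.tendsto 0
    rw [Real.sqrt_zero] at this
    exact this.mono_left nhdsWithin_le_nhds
  have s0' : Tendsto (fun t => (√t)⁻¹) (𝓝[>] (0:ℝ)) atTop := by
    apply Tendsto.inv_tendsto_nhdsGT_zero
    rw [tendsto_nhdsWithin_iff]
    exact ⟨s0, eventually_mem_nhdsWithin.mono fun t ht => Real.sqrt_pos.mpr ht⟩
  have st : Tendsto (fun t => √t) atTop atTop := Real.tendsto_sqrt_atTop
  have st' : Tendsto (fun t => (√t)⁻¹) atTop (𝓝 (0:ℝ)) := st.inv_tendsto_atTop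
  have c0 : Tendsto (Faux p q) (𝓝[>] 0) (𝓝 m) := by
    refine Tendsto.sub (Tendsto.const_mul _ (Eaux_bot.comp ?_)) (Tendsto.const_mul _ (Eaux_top.comp ?_))
    · exact (s0.const_mul q).add_atBot (tendsto_neg_atTop_atBot.comp (s0'.const_mul_atTop hp))
    · exact (s0.const_mul q).add_atTop (s0'.const_mul_atTop hp)
  have ct : Tendsto (Faux p q) atTop (𝓝 l) := by
    refine Tendsto.sub (Tendsto.const_mul _ (Eaux_top.comp ?_)) (Tendsto.const_mul _ (Eaux_top.comp ?_))
    · exact (st.const_mul_atTop hq).atTop_add (st'.const_mul p).neg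
    · exact (st.const_mul_atTop hq).atTop_add (st'.const_mul p)
  have gt : ∀ t, 0 < t → g =ᶠ[𝓝 t] Faux p q := fun t ht => by
    filter_upwards [lt_mem_nhds ht] with u hu
    simp [g, not_le.mpr hu]
  have gc : ContinuousWithinAt g (Ici 0) 0 := by
    rw [← continuousWithinAt_Ioi_iff_Ici]
    have : g 0 = m := by simp [g]
    unfold ContinuousWithinAt
    rw [this]
    refine c0.congr' ?_
    filter_upwards [self_mem_nhdsWithin] with u hu
    simp [g, not_le.mpr (show (0:ℝ) < u from hu)]
  have gd : ∀ t ∈ Ioi (0:ℝ), HasDerivAt g (p * (Real.exp (-p^2/t - q^2*t) / (t * √t))) t :=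
    fun t ht => (Faux_deriv ht).congr_of_eventuallyEq (gt t ht)
  have gl : Tendsto g atTop (𝓝 l) := by
    refine ct.congr' ?_
    filter_upwards [eventually_gt_atTop 0] with u hu
    simp [g, not_le.mpr (show (0:ℝ) < u from hu)]
  have gp : ∀ t ∈ Ioi (0:ℝ), 0 ≤ (p * (Real.exp (-p^2/t - q^2*t) / (t * √t))) := by
    intro t ht
    have : (0:ℝ) < t := ht
    positivity
  have hI := integrableOn_Ioi_deriv_of_nonneg gc gd gp gl
  have hV := integral_Ioi_of_hasDerivAt_of_nonneg gc gd gp gl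
  constructor
  · have := hI.const_mul p⁻¹
    refine this.congr (Eventually.of_forall fun t => ?_)
    simp only []
    field_simp
  · rw [integral_const_mul] at hV
    have : g 0 = m := by simp [g]
    rw [this] at hV
    rw [div_mul_eq_mul_div, eq_div_iff hp.ne', mul_comm, hV]
    ring
end L1
section L5
open Real Set Filter Topology MeasureTheory
open scoped Interval

lemma re_cosh_lower {a : ℝ} (ha : |a| < 1/2) {w : ℂ} (hw : |w.im| ≤ π * |a|) :
    Real.cosh w.re * Real.cos (π * a) ≤ ‖Complex.cosh w‖ := by
  have h1 : (Complex.cosh w).re = Real.cosh w.re * Real.cos w.im := by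
    conv_lhs => rw [← Complex.re_add_im w, Complex.cosh_add, Complex.cosh_mul_I, Complex.sinh_mul_I]
    rw [← Complex.ofReal_cosh, ← Complex.ofReal_sinh, ← Complex.ofReal_cos, ← Complex.ofReal_sin]
    simp
    left; exact Complex.cos_ofReal_re _
  have h2 : Real.cos (π * a) ≤ Real.cos w.im := by
    rw [← Real.cos_abs, ← Real.cos_abs w.im, abs_mul, abs_of_pos Real.pi_pos]
    apply Real.cos_le_cos_of_nonneg_of_le_pi (abs_nonneg _) _ hw
    nlinarith [Real.pi_pos]
  calc _ ≤ Real.cosh w.re * Real.cos w.im := by gcongr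
    _ = (Complex.cosh w).re := h1.symm
    _ ≤ _ := Complex.re_le_norm _

lemma cos_pos_aux {a : ℝ} (ha : |a| < 1/2) : 0 < Real.cos (π * a) := by
  apply Real.cos_pos_of_mem_Ioo
  rw [abs_lt] at ha
  constructor <;> nlinarith [Real.pi_pos]

lemma cosh_ne_aux {a : ℝ} (ha : |a| < 1/2) {w : ℂ} (hw : |w.im| ≤ π * |a|) :
    Complex.cosh w ≠ 0 := by
  rw [← norm_pos_iff]
  exact lt_of_lt_of_le (mul_pos (Real.cosh_pos _) (cos_pos_aux ha)) (re_cosh_lower ha hw)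

lemma tanh_bound {a : ℝ} (ha : |a| < 1/2) {w : ℂ} (hw : |w.im| ≤ π * |a|) :
    ‖Complex.sinh w / Complex.cosh w‖ ≤ (Real.cos (π * a))⁻¹ := by
  have hs : ‖Complex.sinh w‖ ≤ Real.cosh w.re := by
    rw [Complex.sinh, Real.cosh_eq, norm_div]
    have := norm_sub_le (cexp w) (cexp (-w))
    rw [Complex.norm_exp, Complex.norm_exp] at this
    simp at this ⊢
    linarith
  rw [norm_div, div_le_iff₀ (norm_pos_iff.mpr (cosh_ne_aux ha hw))]
  have h := re_cosh_lower ha hw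
  have hc := cos_pos_aux ha
  calc _ ≤ Real.cosh w.re := hs
    _ = (Real.cos (π * a))⁻¹ * (Real.cosh w.re * Real.cos (π * a)) := by field_simp
    _ ≤ _ := by gcongr

lemma gauss_vert {b : ℂ} (hb : 0 < b.re) {a y T : ℝ} (hy : |y| ≤ |a|) :
    ‖cexp (-b * (T + y * I) ^ 2)‖ ≤
      Real.exp (-(b.re * |T| ^ 2 - (2 : ℝ) * |b.im| * |a| * |T| - b.re * a ^ 2)) := by
  rw [GaussianFourier.norm_cexp_neg_mul_sq_add_mul_I b]
  apply Real.exp_le_exp.mpr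
  have h1 : b.im * y * T ≤ |b.im| * |a| * |T| := by
    refine (le_abs_self _).trans ?_
    rw [abs_mul, abs_mul]; gcongr
  have h2 : y^2 ≤ a^2 := sq_le_sq.mpr hy
  rw [sq_abs]
  nlinarith

noncomputable def fC (b : ℂ) (a : ℝ) (z : ℂ) : ℂ :=
  cexp (-b * z ^ 2) * (Complex.sinh (π * (z - a * I)) / Complex.cosh (π * (z - a * I)))

lemma im_aux {a : ℝ} {z : ℂ} (hz : z.im ∈ [[0, a]]) : |(π * (z - a * I) : ℂ).im| ≤ π * |a| := by
  have : (π * (z - a * I) : ℂ).im = π * (z.im - a) := by simp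
  rw [this, abs_mul, abs_of_pos Real.pi_pos]
  refine mul_le_mul_of_nonneg_left ?_ Real.pi_pos.le
  rw [Set.mem_uIcc] at hz
  rcases hz with h | h
  · rw [abs_of_nonpos (by linarith), abs_of_nonneg (by linarith)]; linarith
  · rw [abs_of_nonneg (by linarith), abs_of_nonpos (by linarith)]; linarith

lemma fC_norm {b : ℂ} {a : ℝ} (ha : |a| < 1/2) {z : ℂ} (hz : z.im ∈ [[0, a]]) :
    ‖fC b a z‖ ≤ ‖cexp (-b * z ^ 2)‖ * (Real.cos (π * a))⁻¹ := by
  unfold fC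
  rw [norm_mul]
  gcongr
  exact tanh_bound ha (im_aux hz)

lemma fC_diff {b : ℂ} {a : ℝ} (ha : |a| < 1/2) {z : ℂ} (hz : z.im ∈ [[0, a]]) :
    DifferentiableAt ℂ (fC b a) z := by
  unfold fC
  have := cosh_ne_aux ha (im_aux hz)
  refine DifferentiableAt.mul (by fun_prop) (DifferentiableAt.div (by fun_prop) (by fun_prop) this)

lemma fC_integrable {b : ℂ} (hb : 0 < b.re) {a : ℝ} (ha : |a| < 1/2) {y : ℝ} (hy : y ∈ [[0, a]]) :
    Integrable (fun x : ℝ => fC b a (x + y * I)) := by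
  have hg := (GaussianFourier.integrable_cexp_neg_mul_sq_add_real_mul_I hb y).norm.mul_const
    (Real.cos (π * a))⁻¹
  refine hg.mono' (Continuous.aestronglyMeasurable ?_) (Eventually.of_forall fun x => ?_)
  · rw [continuous_iff_continuousAt]
    intro x
    have h1 : ContinuousAt (fC b a) (x + y * I) := (fC_diff ha (by simpa using hy)).continuousAt
    exact ContinuousAt.comp (f := fun x : ℝ => (x + y * I : ℂ)) h1 (by fun_prop)
  · exact fC_norm ha (by simpa using hy)

lemma vert_tendsto {b : ℂ} (hb : 0 < b.re) {a : ℝ} (ha : |a| < 1/2) (e : ℝ) (he : |e| = 1) :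
    Tendsto (fun T : ℝ => ∫ y : ℝ in (0:ℝ)..a, fC b a ((e * T : ℝ) + y * I)) atTop (𝓝 0) := by
  rw [tendsto_zero_iff_norm_tendsto_zero]
  have hbd : ∀ T : ℝ, 0 ≤ T → ‖∫ y : ℝ in (0:ℝ)..a, fC b a ((e * T : ℝ) + y * I)‖ ≤
      (Real.cos (π * a))⁻¹ * |a| *
       Real.exp (-(b.re * T ^ 2 - (2 : ℝ) * |b.im| * |a| * T - b.re * a ^ 2)) := by
    intro T hT
    have := intervalIntegral.norm_integral_le_of_norm_le_const (a := 0) (b := a)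
      (f := fun y : ℝ => fC b a ((e * T : ℝ) + y * I))
      (C := Real.exp (-(b.re * T ^ 2 - (2 : ℝ) * |b.im| * |a| * T - b.re * a ^ 2)) *
        (Real.cos (π * a))⁻¹) (fun y hy => by
        have hy' := uIoc_subset_uIcc hy
        refine (fC_norm ha (by simpa using hy')).trans ?_
        have hc := cos_pos_aux ha
        gcongr
        have h1 : |y| ≤ |a| := by simpa using abs_sub_left_of_mem_uIcc hy'
        have := gauss_vert hb (T := e * T) h1
        rwa [abs_mul, he, one_mul, abs_of_nonneg hT] at this)
    refine this.trans (le_of_eq ?_)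
    rw [sub_zero]; ring
  refine tendsto_of_tendsto_of_tendsto_of_le_of_le' tendsto_const_nhds ?_
      (Eventually.of_forall fun _ => norm_nonneg _)
      ((eventually_ge_atTop (0 : ℝ)).mono hbd)
  rw [← mul_zero ((Real.cos (π * a))⁻¹ * |a|)]
  refine (Real.tendsto_exp_atBot.comp (tendsto_neg_atTop_atBot.comp ?_)).const_mul _
  apply tendsto_atTop_add_const_right
  simp_rw [sq, ← mul_assoc, ← sub_mul]
  refine Tendsto.atTop_mul_atTop₀ (tendsto_atTop_add_const_right _ _ ?_) tendsto_id
  exact (tendsto_const_mul_atTop_of_pos hb).mpr tendsto_id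

lemma contour_shift {b : ℂ} (hb : 0 < b.re) {a : ℝ} (ha : |a| < 1/2) :
    ∫ x : ℝ, fC b a (x + a * I) = ∫ x : ℝ, fC b a x := by
  have i0 : Integrable (fun x : ℝ => fC b a x) := by
    simpa using fC_integrable hb ha (y := 0) (by simp)
  have i1 := fC_integrable hb ha (y := a) (by simp)
  have t0 := intervalIntegral_tendsto_integral i0 tendsto_neg_atTop_atBot tendsto_id
  have t1 := intervalIntegral_tendsto_integral i1 tendsto_neg_atTop_atBot tendsto_id
  have v1 := vert_tendsto hb ha 1 (by simp)
  have v2 := vert_tendsto hb ha (-1) (by simp)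
  have C : ∀ T : ℝ, (∫ x : ℝ in -T..T, fC b a x) - (∫ x : ℝ in -T..T, fC b a (x + a * I)) +
      I * (∫ y : ℝ in (0:ℝ)..a, fC b a ((1 * T : ℝ) + y * I)) -
      I * (∫ y : ℝ in (0:ℝ)..a, fC b a ((-1 * T : ℝ) + y * I)) = 0 := by
    intro T
    have :=
      integral_boundary_rect_eq_zero_of_differentiableOn (fC b a) (-T)
        (T + a * I) (by
          intro z hz
          rw [mem_reProdIm] at hz
          exact (fC_diff ha (by simpa using hz.2)).differentiableWithinAt)
    simpa using this
  have L := ((t0.sub t1).add (v1.const_mul I)).sub (v2.const_mul I)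
  have L' := tendsto_nhds_unique L (tendsto_const_nhds.congr fun T => (C T).symm)
  simp only [mul_zero, add_zero, sub_zero] at L'
  exact (sub_eq_zero.mp L').symm

/-- symmetrised -/
lemma tanh_integral {b : ℂ} (hb : 0 < b.re) {a : ℝ} (ha : |a| < 1/2) :
    ∫ x : ℝ, cexp (-b * (x + a * I) ^ 2) * (Complex.sinh (π * x) / Complex.cosh (π * x)) =
    ∫ x : ℝ, cexp (-b * x ^ 2) * (-I * (Real.sin (2 * π * a) /
      (Real.cosh (2 * π * x) + Real.cos (2 * π * a)) : ℝ)) := by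
  have h1 : ∫ x : ℝ, cexp (-b * (x + a * I) ^ 2) * (Complex.sinh (π * x) / Complex.cosh (π * x)) =
      ∫ x : ℝ, fC b a (x + a * I) := by simp [fC]
  have i0 : Integrable (fun x : ℝ => fC b a x) := by
    simpa using fC_integrable hb ha (y := 0) (by simp)
  have i0' : Integrable (fun x : ℝ => fC b a ((-x : ℝ))) := i0.comp_neg
  have h2 : ∫ x : ℝ, fC b a ((-x : ℝ)) = ∫ x : ℝ, fC b a x :=
    integral_neg_eq_self (fun x : ℝ => fC b a x) volume
  rw [h1, contour_shift hb ha]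
  have h3 : ∫ x : ℝ, fC b a x = ∫ x : ℝ, (1/2 : ℂ) * (fC b a x + fC b a ((-x : ℝ))) := by
    rw [integral_const_mul, integral_add i0 i0', h2]; ring
  rw [h3]
  congr 1
  ext x
  have n1 : Complex.cosh (π * (x - a * I)) ≠ 0 := cosh_ne_aux ha (im_aux (by simp))
  have n2 : Complex.cosh (π * (((-x : ℝ) : ℂ) - a * I)) ≠ 0 := cosh_ne_aux ha (im_aux (by simp))
  have k : (Real.cosh (2 * π * x) + Real.cos (2 * π * a) : ℂ) =
    2 * (Complex.cosh (π * (x - a * I)) * Complex.cosh (π * (((-x : ℝ) : ℂ) - a * I))) := by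
    push_cast
    rw [← Complex.cosh_mul_I]
    have e1 : (2 * π * x : ℂ) = π * (x - a * I) - π * (((-x : ℝ) : ℂ) - a * I) := by push_cast; ring
    have e2 : (2 * π * a * I : ℂ) = -(π * (x - a * I) + π * (((-x : ℝ) : ℂ) - a * I)) := by
      push_cast; ring
    rw [e1, e2, Complex.cosh_neg, Complex.cosh_add, Complex.cosh_sub]; push_cast; ring
  have k2 : -I * (Real.sin (2 * π * a) : ℂ) = 
     Complex.sinh (π * (x - a * I)) * Complex.cosh (π * (((-x : ℝ) : ℂ) - a * I)) +
     Complex.cosh (π * (x - a * I)) * Complex.sinh (π * (((-x : ℝ) : ℂ) - a * I)) := by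
    rw [← Complex.sinh_add]
    have e2 : π * (x - a * I) + π * (((-x : ℝ) : ℂ) - a * I) = -(2 * π * a * I : ℂ) := by
      push_cast; ring
    rw [e2, Complex.sinh_neg, Complex.sinh_mul_I]; push_cast; ring
  rw [Complex.ofReal_div, Complex.ofReal_add, k, ← mul_div_assoc, k2]
  unfold fC
  have : (((-x : ℝ) : ℂ))^2 = (x:ℂ)^2 := by push_cast; ring
  rw [this]
  field_simp
end L5

section L2
open Real Set Filter Topology MeasureTheory HurwitzZeta

lemma sin_geom {r : ℝ} (h0 : 0 < r) (h1 : r < 1) (θ : ℝ) :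
    HasSum (fun n : ℕ => 2 * Real.sin (θ * n) * r ^ n)
      (Real.sin θ / ((r⁻¹ + r) / 2 - Real.cos θ)) := by
  have hn : ‖(r : ℂ) * cexp (θ * I)‖ < 1 := by
    rw [norm_mul, Complex.norm_exp_ofReal_mul_I, mul_one, Complex.norm_real]
    simpa [abs_of_pos h0] using h1
  have h := (Complex.hasSum_im (hasSum_geometric_of_norm_lt_one hn)).mul_left 2
  have hval : Real.sin θ / ((r⁻¹ + r) / 2 - Real.cos θ) = 2 * (1 - ↑r * cexp (↑θ * I))⁻¹.im := by
    rw [Complex.inv_im]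
    have e : Complex.normSq (1 - r * cexp (θ * I)) = 1 - 2 * r * Real.cos θ + r^2 := by
      rw [Complex.normSq_apply]
      simp [Complex.exp_ofReal_mul_I_re, Complex.exp_ofReal_mul_I_im]
      linear_combination r^2 * Real.sin_sq_add_cos_sq θ
    rw [e]
    have hpos : 0 < 1 - 2 * r * Real.cos θ + r^2 := by
      nlinarith [mul_le_mul_of_nonneg_left (Real.cos_le_one θ) h0.le, sq_pos_of_pos (sub_pos.mpr h1)]
    have e2 : (r⁻¹ + r) / 2 - Real.cos θ = (1 - 2 * r * Real.cos θ + r^2) / (2 * r) := by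
      field_simp; ring
    rw [e2]
    simp [Complex.exp_ofReal_mul_I_im]
    field_simp
  rw [hval]
  refine h.congr_fun fun n => ?_
  have : (n : ℂ) * (θ * I) = ((θ * n : ℝ) : ℂ) * I := by push_cast; ring
  rw [mul_pow, ← Complex.exp_nat_mul, ← Complex.ofReal_pow, this, Complex.im_ofReal_mul,
    Complex.exp_ofReal_mul_I_im]
  ring

noncomputable def Tn (c y : ℝ) (n : ℕ) (t : ℝ) : ℝ :=
  2 * n * Real.sin (2 * π * c * n) * (Real.exp (-(√π * n) ^ 2 / t - (√π * |y|)^2 * t) / (t * √t))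

lemma Tn_int (c : ℝ) {y : ℝ} (hy : y ≠ 0) (n : ℕ) : IntegrableOn (Tn c y n) (Ioi 0) ∧
    ∫ t in Ioi (0:ℝ), Tn c y n t = 2 * Real.sin (2 * π * c * n) * Real.exp (-(2 * π * |y|)) ^ n ∧
    ∫ t in Ioi (0:ℝ), ‖Tn c y n t‖ = 2 * |Real.sin (2 * π * c * n)| * Real.exp (-(2 * π * |y|)) ^ n := by
  rcases Nat.eq_zero_or_pos n with rfl | hn
  · have : Tn c y 0 = fun _ => 0 := by ext t; simp [Tn]
    simp [this]
  have hn' : (0:ℝ) < n := by exact_mod_cast hn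
  have hsp : 0 < √π := Real.sqrt_pos.mpr Real.pi_pos
  have hss : √π * √π = π := Real.mul_self_sqrt Real.pi_pos.le
  obtain ⟨hi, hv⟩ := Jint (p := √π * n) (q := √π * |y|) (by positivity) (by positivity)
  have he : √π / (√π * n) * Real.exp (-2 * (√π * n) * (√π * |y|)) =
      (n:ℝ)⁻¹ * Real.exp (-(2 * π * |y|)) ^ n := by
    rw [← Real.exp_nat_mul]
    congr 1
    · field_simp
    · congr 1
      linear_combination (-2 * n * |y|) * hss
  rw [he] at hv
  refine ⟨hi.const_mul _, ?_, ?_⟩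
  · unfold Tn
    rw [integral_const_mul, hv]
    field_simp
  · have : ∀ t ∈ Ioi (0:ℝ), ‖Tn c y n t‖ = 2 * n * |Real.sin (2 * π * c * n)| *
        (Real.exp (-(√π * n) ^ 2 / t - (√π * |y|)^2 * t) / (t * √t)) := by
      intro t ht
      have ht : (0:ℝ) < t := ht
      unfold Tn
      rw [norm_mul, norm_mul, Real.norm_of_nonneg (by positivity : (0:ℝ) ≤ 2 * n),
        Real.norm_of_nonneg (by positivity :
          0 ≤ (Real.exp (-(√π * n) ^ 2 / t - (√π * |y|)^2 * t) / (t * √t))), Real.norm_eq_abs]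
    rw [setIntegral_congr_fun measurableSet_Ioi this, integral_const_mul, hv]
    field_simp

lemma Tn_hasSum (c y : ℝ) {t : ℝ} (ht : 0 < t) :
    HasSum (fun n => Tn c y n t) (oddKernel c t * Real.exp (-π * t * y ^ 2)) := by
  rw [oddKernel_functional_equation]
  have h := ((hasSum_nat_sinKernel c (t := 1/t) (by positivity)).mul_left
    (1 / t ^ (3 / 2 : ℝ))).mul_right (Real.exp (-π * t * y ^ 2))
  refine h.congr_fun fun n => ?_
  have e : t ^ (3 / 2 : ℝ) = t * √t := by
    rw [show (3/2:ℝ) = 1 + 1/2 by norm_num, Real.rpow_add ht, Real.rpow_one, Real.sqrt_eq_rpow]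
  unfold Tn
  have hss : √π ^ 2 = π := Real.sq_sqrt Real.pi_pos.le
  rw [e, mul_pow, mul_pow, hss, sq_abs, sub_eq_add_neg, Real.exp_add]
  have e1 : -(π * (n:ℝ)^2) / t = -π * n^2 * (1/t) := by ring
  have e2 : -(π * y^2 * t) = -π * t * y^2 := by ring
  rw [e1, e2]
  ring

lemma inner_integral (c : ℝ) {y : ℝ} (hy : y ≠ 0) :
    ∫ t in Ioi (0:ℝ), oddKernel c t * Real.exp (-π * t * y ^ 2) =
      Real.sin (2 * π * c) / (Real.cosh (2 * π * y) - Real.cos (2 * π * c)) := by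
  have hr1 : Real.exp (-(2 * π * |y|)) < 1 := by
    rw [Real.exp_lt_one_iff]
    have := Real.pi_pos
    have : 0 < 2 * π * |y| := by positivity
    linarith
  have hS := hasSum_integral_of_summable_integral_norm (μ := volume.restrict (Ioi (0:ℝ)))
    (F := Tn c y) (fun n => (Tn_int c hy n).1) (by
      refine Summable.of_nonneg_of_le (fun n => integral_nonneg fun _ => norm_nonneg _) (fun n => ?_)
        ((summable_geometric_of_lt_one (Real.exp_pos _).le hr1).mul_left 2)
      rw [(Tn_int c hy n).2.2]
      gcongr
      have := Real.abs_sin_le_one (2 * π * c * n)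
      linarith)
  simp_rw [fun n => (Tn_int c hy n).2.1] at hS
  have h2 := sin_geom (Real.exp_pos _) hr1 (2 * π * c)
  have h3 := hS.unique h2
  rw [setIntegral_congr_fun measurableSet_Ioi
    (g := fun t => ∑' n, Tn c y n t) (fun t ht => (Tn_hasSum c y ht).tsum_eq.symm), h3]
  congr 2
  rw [← Real.exp_neg, neg_neg, ← Real.cosh_eq, ← Real.cosh_abs (2 * π * y), abs_mul,
    abs_of_pos (by positivity : 0 < 2 * π)]
end L2

section L4
open Real Set Filter Topology MeasureTheory HurwitzZeta

lemma oddKernel_integrable (c : ℝ) : IntegrableOn (fun t => (oddKernel c t : ℂ)) (Ioi 0) := by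
  have h := ((isStrong_hurwitzOddFEPair (c : UnitAddCircle)).hasMellin 1).1
  unfold MellinConvergent at h
  simpa [hurwitzOddFEPair] using h

lemma gauss_inv {s : ℂ} (hs : 0 < s.re) : ((π : ℂ) / (π * s)) ^ (1 / 2 : ℂ) = 1 / s ^ (1 / 2 : ℂ) := by
  have hp : (π : ℂ) ≠ 0 := by exact_mod_cast Real.pi_ne_zero
  have : (π : ℂ) / (π * s) = s⁻¹ := by
    have : s ≠ 0 := by rintro rfl; simp at hs
    field_simp
  rw [this, Complex.inv_cpow, one_div ((s:ℂ) ^ _)]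
  intro h
  rw [Complex.arg_eq_pi_iff] at h
  linarith [h.1]

lemma fubini_part (c : ℝ) {s : ℂ} (hs : 0 < s.re) :
    IntegrableOn (fun t : ℝ => (oddKernel c t : ℂ) / (t + s) ^ (1 / 2 : ℂ)) (Ioi 0) ∧
    ∫ t in Ioi (0:ℝ), (oddKernel c t : ℂ) / (t + s) ^ (1 / 2 : ℂ) =
      ∫ y : ℝ, cexp (-(π * s) * y ^ 2) *
        (Real.sin (2 * π * c) / (Real.cosh (2 * π * y) - Real.cos (2 * π * c)) : ℝ) := by
  let f : ℝ → ℝ → ℂ := fun t y => (oddKernel c t : ℂ) * cexp (-(π * (t + s)) * y ^ 2)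
  have hG := oddKernel_integrable c
  have hb : 0 < (π * s : ℂ).re := by simpa using mul_pos Real.pi_pos hs
  have hg := integrable_cexp_neg_mul_sq hb
  have hf : Integrable (Function.uncurry f) ((volume.restrict (Ioi (0:ℝ))).prod volume) := by
    refine (Integrable.mul_prod hG hg).mono ?_ ?_
    · refine AEStronglyMeasurable.mul hG.aestronglyMeasurable.comp_fst ?_
      apply Continuous.aestronglyMeasurable
      fun_prop
    · have h0 : ∀ᵐ t : ℝ ∂(volume.restrict (Ioi (0:ℝ))), 0 < t := ae_restrict_mem measurableSet_Ioi
      filter_upwards [Measure.quasiMeasurePreserving_fst.ae h0] with z hz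
      simp only [Function.uncurry, f, norm_mul]
      gcongr
      rw [Complex.norm_exp, Complex.norm_exp]
      apply Real.exp_le_exp.mpr
      have e : ∀ w : ℂ, (-(π * w) * (z.2:ℂ)^2).re = - (π * z.2^2 * w.re) := by
        intro w
        have : (-(π * w) * (z.2:ℂ)^2) = ((-(π * z.2^2) : ℝ) : ℂ) * w := by push_cast; ring
        rw [this, Complex.re_ofReal_mul]; ring
      rw [e, e, Complex.add_re, Complex.ofReal_re]
      have : 0 ≤ π * z.2^2 := by positivity
      nlinarith
  have inner1 : ∀ t ∈ Ioi (0:ℝ), ∫ y, f t y = (oddKernel c t : ℂ) / (t + s) ^ (1 / 2 : ℂ) := by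
    intro t ht
    have ht : (0:ℝ) < t := ht
    have hp : 0 < ((t:ℂ) + s).re := by simp; linarith
    simp only [f]
    rw [integral_const_mul, integral_gaussian_complex (by simpa using mul_pos Real.pi_pos hp),
      gauss_inv hp]
    ring
  constructor
  · exact IntegrableOn.congr_fun (f := fun t => ∫ y, f t y) hf.integral_prod_left inner1 measurableSet_Ioi
  · rw [← setIntegral_congr_fun measurableSet_Ioi inner1, integral_integral_swap hf]
    apply integral_congr_ae
    have : ∀ᵐ y : ℝ, y ≠ 0 := by simp [ae_iff]
    filter_upwards [this] with y hy
    rw [← inner_integral c hy, ← integral_complex_ofReal, ← integral_const_mul]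
    congr 1
    ext t
    simp only [f]
    push_cast
    rw [mul_left_comm, ← Complex.exp_add]
    congr 2
    ring

lemma gUnary_eq (a : ℝ) {t : ℝ} (ht : 0 < t) :
    gUnary (a + 1/2) 1 (I * t) =
      -cexp (2 * π * I * a) * (oddKernel ((a + 1/2 : ℝ) : UnitAddCircle) t : ℂ) := by
  have h := (Complex.hasSum_ofReal.mpr (hasSum_int_oddKernel (a + 1/2) ht)).mul_left
    (-cexp (2 * π * I * a))
  rw [← h.tsum_eq]
  unfold gUnary
  congr 1
  ext n
  have e1 : cexp (2 * π * I * (1:ℝ) * ((n:ℂ) + (a + 1/2 : ℝ))) = -cexp (2 * π * I * a) := by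
    have : 2 * π * I * (1:ℝ) * ((n:ℂ) + (a + 1/2 : ℝ)) = 2 * π * I * a + π * I + n * (2 * π * I) := by
      push_cast; ring
    rw [this, Complex.exp_add, Complex.exp_add, Complex.exp_pi_mul_I, Complex.exp_int_mul_two_pi_mul_I]
    ring
  have e2 : cexp (π * I * (I * t) * ((n:ℂ) + (a + 1/2 : ℝ)) ^ 2) =
      (Real.exp (-π * (n + (a + 1/2)) ^ 2 * t) : ℂ) := by
    push_cast
    congr 1
    linear_combination (π * t * ((n:ℂ) + (a + 1/2)) ^ 2) * Complex.I_sq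
  rw [e1, e2]
  push_cast
  ring

lemma mordell_eq {τ : ℂ} (hτ : 0 < τ.im) {a : ℝ} (ha : |a| < 1/2) :
    cexp (-(π * I * a ^ 2 * τ)) * mordellH (a * τ - 1/2) τ = 1 / (-I * τ) ^ (1 / 2 : ℂ) +
      ∫ x : ℝ, cexp (-(π * (-I * τ)) * (x + a * I) ^ 2) *
        (Complex.sinh (π * x) / Complex.cosh (π * x)) := by
  have hs : 0 < (-I * τ).re := by simpa using hτ
  have hb : 0 < (π * (-I * τ) : ℂ).re := by
    rw [Complex.re_ofReal_mul]; exact mul_pos Real.pi_pos hs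
  have i1 := GaussianFourier.integrable_cexp_neg_mul_sq_add_real_mul_I hb a
  have i2 : Integrable (fun x : ℝ => cexp (-(π * (-I * τ)) * (x + a * I) ^ 2) *
        (Complex.sinh (π * x) / Complex.cosh (π * x))) := by
    simpa [fC] using fC_integrable hb ha (y := a) (by simp)
  rw [← gauss_inv hs, ← GaussianFourier.integral_cexp_neg_mul_sq_add_real_mul_I hb a,
    ← integral_add i1 i2, mordellH, ← integral_const_mul]
  congr 1
  ext x
  have hc : Complex.cosh (π * x) ≠ 0 := by
    rw [← Complex.ofReal_mul, ← Complex.ofReal_cosh]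
    exact_mod_cast (Real.cosh_pos _).ne'
  have e : cexp (-(π * I * a ^ 2 * τ)) * cexp (π * I * τ * x ^ 2 - 2 * π * (a * τ - 1 / 2) * x) =
      cexp (-(π * (-I * τ)) * (x + a * I) ^ 2) * (Complex.cosh (π * x) + Complex.sinh (π * x)) := by
    rw [Complex.cosh_add_sinh, ← Complex.exp_add, ← Complex.exp_add]
    congr 1
    linear_combination (-2 * π * a * x * τ - π * I * τ * a^2) * Complex.I_sq
  rw [← mul_div_assoc, e]
  field_simp

end L4

/-- Lemma 2.7(iii): for `a ∈ (−1/2,1/2) ∖ {0}` and `τ ∈ ℍ`,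
`∫_0^{i∞} g_{a+1/2,1}(z)/√(−i(z+τ)) dz = −e(−a²τ/2 + a) h(aτ − 1/2; τ) + e(a)/√(−iτ)`. -/
theorem eichler_ga1_h (τ : ℂ) (hτ : 0 < τ.im) (a : ℝ)
    (ha₁ : -(1/2) < a) (ha₂ : a < 1/2) (ha₀ : a ≠ 0) :
    MeasureTheory.IntegrableOn
      (fun t : ℝ => gUnary (a + 1/2) 1 (I * t) / ((-I * (I * t + τ)) ^ ((1 : ℂ)/2)))
      (Set.Ioi 0) ∧
    I * ∫ t in Set.Ioi (0 : ℝ),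
        gUnary (a + 1/2) 1 (I * t) / ((-I * (I * t + τ)) ^ ((1 : ℂ)/2)) =
      -Complex.exp (2 * (Real.pi : ℂ) * I * (-(a : ℂ) ^ 2 * τ / 2 + (a : ℂ))) *
        mordellH ((a : ℂ) * τ - 1/2) τ +
        Complex.exp (2 * (Real.pi : ℂ) * I * (a : ℂ)) / ((-I * τ) ^ ((1 : ℂ)/2)) := by
  have ha : |a| < 1/2 := abs_lt.mpr ⟨ha₁, ha₂⟩
  have hs : 0 < (-I * τ).re := by simpa using hτ
  have hb : 0 < (Real.pi * (-I * τ) : ℂ).re := by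
    rw [Complex.re_ofReal_mul]; exact mul_pos Real.pi_pos hs
  obtain ⟨hi, hv⟩ := fubini_part (a + 1/2) hs
  have hcongr : ∀ t ∈ Set.Ioi (0:ℝ),
      -cexp (2 * Real.pi * I * a) * ((HurwitzZeta.oddKernel ((a + 1/2 : ℝ) : UnitAddCircle) t : ℂ) /
        (t + -I * τ) ^ (1 / 2 : ℂ)) =
      gUnary (a + 1/2) 1 (I * t) / ((-I * (I * t + τ)) ^ ((1 : ℂ)/2)) := by
    intro t ht
    have : -I * (I * t + τ) = t + -I * τ := by linear_combination (-t : ℂ) * Complex.I_sq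
    rw [gUnary_eq a ht, this]
    ring
  refine ⟨MeasureTheory.IntegrableOn.congr_fun (hi.const_mul _) hcongr measurableSet_Ioi, ?_⟩
  rw [← MeasureTheory.setIntegral_congr_fun measurableSet_Ioi hcongr,
    MeasureTheory.integral_const_mul, hv]
  have e1 : -Complex.exp (2 * (Real.pi : ℂ) * I * (-(a : ℂ) ^ 2 * τ / 2 + (a : ℂ))) *
        mordellH ((a : ℂ) * τ - 1/2) τ = -cexp (2 * Real.pi * I * a) *
        (cexp (-(Real.pi * I * a ^ 2 * τ)) * mordellH ((a : ℂ) * τ - 1/2) τ) := by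
    rw [← mul_assoc, neg_mul (cexp _) (cexp _), ← Complex.exp_add]
    congr 3
    ring
  rw [e1, mordell_eq hτ ha, tanh_integral hb ha]
  have e2 : ∀ x : ℝ, cexp (-(Real.pi * (-I * τ)) * x ^ 2) * (-I * (Real.sin (2 * Real.pi * a) /
      (Real.cosh (2 * Real.pi * x) + Real.cos (2 * Real.pi * a)) : ℝ)) =
      I * (cexp (-(Real.pi * (-I * τ)) * x ^ 2) * (Real.sin (2 * Real.pi * (a + 1/2)) /
      (Real.cosh (2 * Real.pi * x) - Real.cos (2 * Real.pi * (a + 1/2))) : ℝ)) := by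
    intro x
    have : 2 * Real.pi * (a + 1/2) = 2 * Real.pi * a + Real.pi := by ring
    rw [this, Real.sin_add_pi, Real.cos_add_pi, sub_neg_eq_add, neg_div, Complex.ofReal_neg]
    ring
  simp_rw [e2]
  rw [MeasureTheory.integral_const_mul]
  ring
end
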